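/- Let s, t ≥ 1 and n = s(2t+1). For i ∈ [2t+1], let P_i = { j ∈ [n] : j ≡ i (mod 2t+1) } (a set of size s), and let C_i be a set of bijections from [s] onto P_i such that any two distinct elements of C_i differ in at least 4t+1 positions. Let C ⊆ S_n be the interleaved code consisting of all permutations σ of [n] obtained by choosing σ_i ∈ C_i for each i ∈ [2t+1] and setting σ(j) = σ_i(⌈j/(2t+1)⌉) where i ≡ j (mod 2t+1). Then for all distinct σ, π ∈ C, the translocation distance satisfies d∘(σ,π) ≥ 2t+1; equivalently, the length of the longest common subsequence of any two distinct codewords is less than n − 2t. -/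

import Mathlib

/-- `IsMove l l'` holds if `l'` is obtained from `l` by a single translocation:
removing the element at position `i` and reinserting it at position `j`. -/
def IsMove {α : Type*} (l l' : List α) : Prop :=
  ∃ i j : Fin l.length, l' = (l.eraseIdx i).insertIdx j (l.get i)

/-- `ReachIn step m l l'` holds if `l'` can be obtained from `l` by `m` applications
of the relation `step`. -/
def ReachIn {α : Type*} (step : List α → List α → Prop) : ℕ → List α → List α → Prop
  | 0, l, l' => l = l'
  | m+1, l, l' => ∃ l'', step l l'' ∧ ReachIn step m l'' l'

/-- The one-line notation of a permutation of `Fin n`. -/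
def oneLine {n : ℕ} (σ : Equiv.Perm (Fin n)) : List (Fin n) := List.ofFn σ

/-- The translocation distance: the minimum number of translocations transforming
the one-line notation of `σ` into that of `π`. -/
noncomputable def translocDist {n : ℕ} (σ π : Equiv.Perm (Fin n)) : ℕ :=
  sInf {m | ReachIn IsMove m (oneLine σ) (oneLine π)}

/-!
A translocation shifts every entry other than the moved one by at most one position. Hence, after
`m` translocations, all entries outside a set `D` of at most `m` moved ones are displaced by at
most `m`. In an interleaved code with `r` classes, an entry determines its position modulo `r`, so
for `m < r` an entry outside `D` is not displaced at all. The entries at the positions where the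
two codewords disagree therefore all lie in `D`, and there are at most `m` such positions. On the
other hand, distinct codewords differ in some component, which yields at least `d` disagreements
if `d` is the minimum Hamming distance of the component codes.
-/

theorem idxOf_insertIdx_mem_Icc {α : Type*} [DecidableEq α] {x v : α} (hx : x ≠ v) (l : List α)
    (j : ℕ) : (l.insertIdx j x).idxOf v ∈ Set.Icc (l.idxOf v) (l.idxOf v + 1) := by
  induction l generalizing j with
  | nil => cases j <;> simp [List.idxOf_cons_ne _ hx]
  | cons a l ih =>
    cases j with
    | zero => simp [List.idxOf_cons_ne _ hx]
    | succ j =>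
      by_cases hav : a = v
      · simp [hav]
      · simpa [List.idxOf_cons_ne _ hav] using ih j

namespace IsMove

variable {α : Type*} {l l' : List α}

theorem cons (a : α) (h : IsMove l l') : IsMove (a :: l) (a :: l') := by
  obtain ⟨i, j, rfl⟩ := h
  exact ⟨i.succ, j.succ, by simp⟩

theorem swap (a b : α) (l : List α) : IsMove (a :: b :: l) (b :: a :: l) :=
  ⟨⟨0, by simp⟩, ⟨1, by simp⟩, by simp⟩

theorem exists_abs_idxOf_sub_idxOf_le_one [DecidableEq α] (h : IsMove l l') :
    ∃ x, ∀ v ≠ x, |(l'.idxOf v : ℤ) - l.idxOf v| ≤ 1 := by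
  obtain ⟨i, j, rfl⟩ := h
  refine ⟨l.get i, fun v hv => ?_⟩
  -- Both lists arise from `l.eraseIdx i` by inserting `l.get i`.
  have hl : (l.eraseIdx i).insertIdx i (l.get i) = l := List.insertIdx_eraseIdx_getElem i.isLt
  have before := idxOf_insertIdx_mem_Icc hv.symm (l.eraseIdx i) i
  have after := idxOf_insertIdx_mem_Icc hv.symm (l.eraseIdx i) j
  rw [hl] at before
  rw [Set.mem_Icc] at before after
  rw [abs_le]
  omega

end IsMove

namespace ReachIn

variable {α : Type*} {l l' : List α}

theorem exists_of_reflTransGen {step : List α → List α → Prop}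
    (h : Relation.ReflTransGen step l l') : ∃ m, ReachIn step m l l' := by
  induction h using Relation.ReflTransGen.head_induction_on with
  | refl => exact ⟨0, rfl⟩
  | head hstep _ ih =>
    obtain ⟨m, hm⟩ := ih
    exact ⟨m + 1, _, hstep, hm⟩

theorem exists_finset_abs_idxOf_sub_idxOf_le [DecidableEq α] {m : ℕ} (h : ReachIn IsMove m l l') :
    ∃ D : Finset α, D.card ≤ m ∧ ∀ v ∉ D, |(l'.idxOf v : ℤ) - l.idxOf v| ≤ m := by
  induction m generalizing l with
  | zero =>
    obtain rfl : l = l' := h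
    exact ⟨∅, by simp⟩
  | succ m ih =>
    obtain ⟨l₁, hmove, hreach⟩ := h
    obtain ⟨x, hx⟩ := hmove.exists_abs_idxOf_sub_idxOf_le_one
    obtain ⟨D, hcard, hD⟩ := ih hreach
    refine ⟨insert x D, (Finset.card_insert_le x D).trans (by omega), fun v hv => ?_⟩
    rw [Finset.mem_insert, not_or] at hv
    calc |(l'.idxOf v : ℤ) - l.idxOf v|
        ≤ |(l'.idxOf v : ℤ) - l₁.idxOf v| + |(l₁.idxOf v : ℤ) - l.idxOf v| := abs_sub_le _ _ _
      _ ≤ m + 1 := add_le_add (hD v hv.2) (hx v hv.1)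
      _ = (m + 1 : ℕ) := by push_cast; rfl

end ReachIn

theorem reflTransGen_isMove_of_perm {α : Type*} {l l' : List α} (h : l.Perm l') :
    Relation.ReflTransGen IsMove l l' := by
  induction h with
  | nil => exact .refl
  | cons a _ ih => exact ih.lift (a :: ·) fun _ _ => IsMove.cons a
  | swap a b l => exact .single (IsMove.swap b a l)
  | trans _ _ ih₁ ih₂ => exact ih₁.trans ih₂

section Permutations

variable {n : ℕ} (σ π : Equiv.Perm (Fin n))

theorem oneLine_perm_oneLine : (oneLine σ).Perm (oneLine π) := by
  have perm_finRange (τ : Equiv.Perm (Fin n)) : (oneLine τ).Perm (List.finRange n) :=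
    τ.ofFn_comp_perm id |>.trans (by rw [List.ofFn_id])
  exact (perm_finRange σ).trans (perm_finRange π).symm

theorem idxOf_oneLine (v : Fin n) : (oneLine σ).idxOf v = σ.symm v := by
  have h := (List.nodup_ofFn.2 σ.injective).idxOf_getElem (σ.symm v) (by simp)
  simpa [oneLine] using h

-- Reachability of `π` from `σ` matters here: the infimum of the empty set is the junk value `0`.
theorem reachIn_translocDist : ReachIn IsMove (translocDist σ π) (oneLine σ) (oneLine π) :=
  Nat.sInf_mem (s := {m | ReachIn IsMove m (oneLine σ) (oneLine π)})
    (ReachIn.exists_of_reflTransGen (reflTransGen_isMove_of_perm (oneLine_perm_oneLine σ π)))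

variable {σ π}

theorem min_hammingDist_le_translocDist {r : ℕ}
    (h : ∀ v, (σ.symm v : ℕ) ≡ π.symm v [MOD r]) :
    min r (hammingDist σ π) ≤ translocDist σ π := by
  obtain ⟨D, hcard, hD⟩ := (reachIn_translocDist σ π).exists_finset_abs_idxOf_sub_idxOf_le
  rcases le_or_gt r (translocDist σ π) with hr | hr
  · exact min_le_of_left_le hr
  have symm_eq_of_notMem : ∀ v ∉ D, σ.symm v = π.symm v := by
    intro v hv
    have hdispl := hD v hv
    rw [idxOf_oneLine, idxOf_oneLine] at hdispl
    exact Fin.ext ((h v).eq_of_abs_lt (hdispl.trans_lt (by exact_mod_cast hr)))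
  have mem_of_ne : ∀ j, σ j ≠ π j → σ j ∈ D := by
    intro j hj
    by_contra hmem
    have hsymm := symm_eq_of_notMem (σ j) hmem
    rw [σ.symm_apply_apply, Equiv.eq_symm_apply] at hsymm
    exact hj hsymm.symm
  calc min r (hammingDist σ π)
      ≤ hammingDist σ π := min_le_right _ _
    _ ≤ D.card := Finset.card_le_card_of_injOn σ
        (fun j hj => mem_of_ne j (by simpa using hj)) σ.injective.injOn
    _ ≤ translocDist σ π := hcard

end Permutations

section Interleaving

variable {s r : ℕ} {α : Type*}

/-- The interleaving of `r` words of length `s`, with positions counted from zero: position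
`k * r + i` carries the `k`-th letter of the `i`-th word. -/
def interleave (f : Fin r → Fin s → α) (j : Fin (s * r)) : α :=
  f j.modNat j.divNat

theorem interleave_finProdFinEquiv (f : Fin r → Fin s → α) (k : Fin s) (i : Fin r) :
    interleave f (finProdFinEquiv (k, i)) = f i k := by
  have h := finProdFinEquiv.symm_apply_apply (k, i)
  rw [finProdFinEquiv_symm_apply, Prod.mk.injEq] at h
  rw [interleave, h.1, h.2]

theorem hammingDist_le_hammingDist_interleave [DecidableEq α] (f g : Fin r → Fin s → α)
    (i : Fin r) : hammingDist (f i) (g i) ≤ hammingDist (interleave f) (interleave g) := by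
  refine Finset.card_le_card_of_injOn (fun k => finProdFinEquiv (k, i)) (fun k hk => ?_)
    (finProdFinEquiv.injective.comp (Prod.mk_left_injective i)).injOn
  simpa [interleave_finProdFinEquiv] using hk

theorem symm_modEq_symm_of_interleave {c : Fin (s * r) → Fin r}
    {f g : Fin r → Fin s → Fin (s * r)} (hf : ∀ i k, c (f i k) = i) (hg : ∀ i k, c (g i k) = i)
    {σ π : Equiv.Perm (Fin (s * r))} (hσ : σ = interleave f) (hπ : π = interleave g)
    (v : Fin (s * r)) : (σ.symm v : ℕ) ≡ π.symm v [MOD r] := by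
  have modNat_symm {τ : Equiv.Perm (Fin (s * r))} {w : Fin r → Fin s → Fin (s * r)}
      (hw : ∀ i k, c (w i k) = i) (hτ : τ = interleave w) : (τ.symm v).modNat = c v := by
    conv_rhs => rw [← τ.apply_symm_apply v, hτ]
    exact (hw _ _).symm
  exact congrArg Fin.val ((modNat_symm hf hσ).trans (modNat_symm hg hπ).symm)

end Interleaving

/-- The alphabet `P_i` of the `i`-th component code is the fibre of `c` over `i`. -/
theorem interleaved_min_translocDist_general {s r d : ℕ} (c : Fin (s * r) → Fin r)
    (Cs : Fin r → Set (Fin s → Fin (s * r)))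
    (hclass : ∀ i, ∀ f ∈ Cs i, ∀ k, c (f k) = i)
    (hdist : ∀ i, (Cs i).Pairwise fun f g => d ≤ hammingDist f g)
    {σ π : Equiv.Perm (Fin (s * r))} {fσ fπ : Fin r → Fin s → Fin (s * r)}
    (hfσ : ∀ i, fσ i ∈ Cs i) (hfπ : ∀ i, fπ i ∈ Cs i)
    (hσ : σ = interleave fσ) (hπ : π = interleave fπ) (hne : σ ≠ π) :
    min r d ≤ translocDist σ π := by
  have hmod := symm_modEq_symm_of_interleave (fun i => hclass i _ (hfσ i))
    (fun i => hclass i _ (hfπ i)) hσ hπ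
  have hcomp : fσ ≠ fπ := fun h => hne (DFunLike.coe_injective (by rw [hσ, hπ, h]))
  obtain ⟨i, hi⟩ := Function.ne_iff.1 hcomp
  have hd : d ≤ hammingDist σ π := calc
    d ≤ hammingDist (fσ i) (fπ i) := hdist i (hfσ i) (hfπ i) hi
    _ ≤ hammingDist (interleave fσ) (interleave fπ) :=
      hammingDist_le_hammingDist_interleave fσ fπ i
    _ = hammingDist σ π := by rw [hσ, hπ]
  exact (min_le_min_left r hd).trans (min_hammingDist_le_translocDist hmod)

/-- Interleaving construction (Theorem: minimum distance of interleaved codes).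
Let `s, t ≥ 1` and `n = s(2t+1)`. Partition `[n]` into the residue classes
`P_i = { v : v ≡ i (mod 2t+1) }`, each of size `s`. For each class `i`, let `Cs i` be
a set of bijections from `[s]` onto `P_i` (injective maps with all values in class `i`)
any two distinct members of which differ in at least `4t+1` positions. If the
permutations `σ` and `π` are interleavings of codewords `fσ i ∈ Cs i` and
`fπ i ∈ Cs i` (the entry in position `j` comes from the component of class
`j mod (2t+1)`, in position `j div (2t+1)`), and `σ ≠ π`, then the translocation
distance between `σ` and `π` is at least `2t+1`. -/
theorem interleaved_min_translocDist (s t : ℕ) (hs : 1 ≤ s) (ht : 1 ≤ t)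
    (Cs : Fin (2 * t + 1) → Set (Fin s → Fin (s * (2 * t + 1))))
    (hmem : ∀ i, ∀ f ∈ Cs i,
      Function.Injective f ∧ ∀ k, ((f k : ℕ)) % (2 * t + 1) = (i : ℕ))
    (hdist : ∀ i, ∀ f ∈ Cs i, ∀ g ∈ Cs i, f ≠ g →
      4 * t + 1 ≤ (Finset.univ.filter fun k => f k ≠ g k).card)
    (σ π : Equiv.Perm (Fin (s * (2 * t + 1))))
    (fσ fπ : Fin (2 * t + 1) → Fin s → Fin (s * (2 * t + 1)))
    (hfσ : ∀ i, fσ i ∈ Cs i) (hfπ : ∀ i, fπ i ∈ Cs i)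
    (hσ : ∀ j : Fin (s * (2 * t + 1)),
      σ j = fσ ⟨(j : ℕ) % (2 * t + 1), Nat.mod_lt _ (by omega)⟩
              ⟨(j : ℕ) / (2 * t + 1),
                Nat.div_lt_of_lt_mul (lt_of_lt_of_eq j.isLt (Nat.mul_comm s (2 * t + 1)))⟩)
    (hπ : ∀ j : Fin (s * (2 * t + 1)),
      π j = fπ ⟨(j : ℕ) % (2 * t + 1), Nat.mod_lt _ (by omega)⟩
              ⟨(j : ℕ) / (2 * t + 1),
                Nat.div_lt_of_lt_mul (lt_of_lt_of_eq j.isLt (Nat.mul_comm s (2 * t + 1)))⟩)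
    (hne : σ ≠ π) :
    2 * t + 1 ≤ translocDist σ π := by
  simpa using interleaved_min_translocDist_general (d := 2 * t + 1) Fin.modNat Cs
    (fun i f hf k => Fin.ext ((hmem i f hf).2 k))
    (fun i f hf g hg hfg => (by omega : 2 * t + 1 ≤ 4 * t + 1).trans (hdist i f hf g hg hfg))
    hfσ hfπ (funext hσ) (funext hπ) hne
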